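/- Let X be a Tychonoff space with a countable π-base. Then C_ph(X) is separable if and only if X is separable submetrizable and has a countable π-network consisting of 𝓘-sets. -/

import Mathlib

open TopologicalSpace Set Topology

/-- The point-open topology `p` on `C(X, ℝ)`. -/
def pointOpenTopology (X : Type*) [TopologicalSpace X] : TopologicalSpace C(X, ℝ) :=
  generateFrom {S | ∃ (x : X) (U : Set ℝ), IsOpen U ∧ S = {f : C(X, ℝ) | f x ∈ U}}

/-- The open-point topology `h` on `C(X, ℝ)`. -/
def openPointTopology (X : Type*) [TopologicalSpace X] : TopologicalSpace C(X, ℝ) :=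
  generateFrom {S | ∃ (V : Set X) (r : ℝ), IsOpen V ∧ S = {f : C(X, ℝ) | ∃ x ∈ V, f x = r}}

/-- The bi-point-open topology `ph` on `C(X, ℝ)`: generated by both kinds of subbasic sets. -/
def biPointOpenTopology (X : Type*) [TopologicalSpace X] : TopologicalSpace C(X, ℝ) :=
  generateFrom
    ({S | ∃ (x : X) (U : Set ℝ), IsOpen U ∧ S = {f : C(X, ℝ) | f x ∈ U}} ∪
     {S | ∃ (V : Set X) (r : ℝ), IsOpen V ∧ S = {f : C(X, ℝ) | ∃ x ∈ V, f x = r}})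

/-- The dispersion character: minimum cardinality of a nonempty open subset. -/
noncomputable def dispersionCharacter (X : Type*) [TopologicalSpace X] : Cardinal :=
  sInf {c | ∃ U : Set X, IsOpen U ∧ U.Nonempty ∧ c = Cardinal.mk U}

/-- A π-network: a family of nonempty subsets such that every nonempty open set contains one. -/
def IsPiNetwork {X : Type*} [TopologicalSpace X] (γ : Set (Set X)) : Prop :=
  (∀ A ∈ γ, A.Nonempty) ∧ ∀ U : Set X, IsOpen U → U.Nonempty → ∃ A ∈ γ, A ⊆ U

/-- A π-base: a family of nonempty open subsets such that every nonempty open set contains one. -/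
def IsPiBase {X : Type*} [TopologicalSpace X] (γ : Set (Set X)) : Prop :=
  (∀ A ∈ γ, IsOpen A ∧ A.Nonempty) ∧ ∀ U : Set X, IsOpen U → U.Nonempty → ∃ A ∈ γ, A ⊆ U

/-- A network. -/
def IsNetwork {X : Type*} [TopologicalSpace X] (𝒩 : Set (Set X)) : Prop :=
  ∀ (x : X) (U : Set X), IsOpen U → x ∈ U → ∃ N ∈ 𝒩, x ∈ N ∧ N ⊆ U

/-- An 𝓘-set. -/
def IsISet {X : Type*} [TopologicalSpace X] (A : Set X) : Prop :=
  ∃ (f : X → ℝ) (a b : ℝ), Continuous f ∧ a < b ∧ Icc a b ⊆ f '' A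

/-- A T₀-separating family. -/
def T0Separating {X : Type*} (γ : Set (Set X)) : Prop :=
  ∀ x y : X, x ≠ y → ∃ V ∈ γ, (x ∈ V ∧ y ∉ V) ∨ (y ∈ V ∧ x ∉ V)

/-- A zero-set. -/
def IsZeroSet {X : Type*} [TopologicalSpace X] (Z : Set X) : Prop :=
  ∃ f : X → ℝ, Continuous f ∧ Z = f ⁻¹' {0}

/-- Separable submetrizable: admits a coarser separable metrizable topology. -/
def SeparableSubmetrizable (X : Type*) [t : TopologicalSpace X] : Prop :=
  ∃ t' : TopologicalSpace X, (∀ U : Set X, IsOpen[t'] U → IsOpen[t] U) ∧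
    @SeparableSpace X t' ∧ @MetrizableSpace X t'

/-- Hypothesis (M). -/
def HypothesisM : Prop :=
  ∀ A : Set ℝ, Cardinal.mk A = Cardinal.continuum →
    ∃ f : A → ℝ, Continuous f ∧ Set.range f = Icc (0 : ℝ) 1

/-- A sequence of continuous functions whose joint range contains the Hilbert cube. -/
lemma exists_peano_seq : ∃ P : ℕ → C(ℝ, ℝ), ∀ t : ℕ → ℝ, (∀ n, t n ∈ Icc (0 : ℝ) 1) →
    ∃ c, ∀ n, P n c = t n := by
  let : MetricSpace (ℕ → Icc (0 : ℝ) 1) := metrizableSpaceMetric _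
  obtain ⟨F, hF, hs⟩ := exists_nat_bool_continuous_surjective_of_compact (ℕ → Icc (0 : ℝ) 1)
  have key : ∀ n, ∃ g : C(ℝ, ℝ), ∀ x : cantorSet,
      g x = (F (cantorSetHomeomorphNatToBool x) n : ℝ) := by
    intro n
    have hc : Continuous (fun x : cantorSet => (F (cantorSetHomeomorphNatToBool x) n : ℝ)) :=
      continuous_subtype_val.comp ((continuous_apply n).comp
        (hF.comp cantorSetHomeomorphNatToBool.continuous))
    obtain ⟨g, hg⟩ := ContinuousMap.exists_restrict_eq isClosed_cantorSet (⟨_, hc⟩ : C(cantorSet, ℝ))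
    exact ⟨g, fun x => by simpa using congrArg (fun k : C(cantorSet, ℝ) => k x) hg⟩
  choose P hP using key
  refine ⟨P, fun t ht => ?_⟩
  obtain ⟨b, hb⟩ := hs (fun n => ⟨t n, ht n⟩)
  refine ⟨(cantorSetHomeomorphNatToBool.symm b : cantorSet), fun n => ?_⟩
  rw [hP, Homeomorph.apply_symm_apply, hb]

/-- If countably many continuous images of `U` cover the line then `U` is an 𝓘-set. -/
lemma isISet_of_cover {X : Type*} [TopologicalSpace X] {U : Set X} (f : ℕ → C(X, ℝ))
    (h : ∀ r : ℝ, ∃ n, ∃ x ∈ U, f n x = r) : IsISet U := by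
  obtain ⟨P, hP⟩ := exists_peano_seq
  by_contra hU
  have key : ∀ n, ∃ t ∈ Icc (0 : ℝ) 1, t ∉ (fun x => P n (f n x)) '' U := by
    intro n
    by_contra! hn
    exact hU ⟨fun x => P n (f n x), 0, 1, by fun_prop, one_pos, hn⟩
  choose t ht ht' using key
  obtain ⟨c, hc⟩ := hP t ht
  obtain ⟨n, x, hx, hxc⟩ := h c
  exact ht' n ⟨x, hx, by simp only [hxc, hc]⟩

lemma IsISet.mono {X : Type*} [TopologicalSpace X] {A B : Set X} (hA : IsISet A) (h : A ⊆ B) :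
    IsISet B := by
  obtain ⟨f, a, b, hf, hab, hs⟩ := hA
  exact ⟨f, a, b, hf, hab, hs.trans (image_mono h)⟩

lemma IsISet.infinite {X : Type*} [TopologicalSpace X] {A : Set X} (hA : IsISet A) :
    A.Infinite := by
  obtain ⟨f, a, b, hf, hab, hs⟩ := hA
  exact ((Icc_infinite hab).mono hs).of_image f

lemma IsISet.rescale {X : Type*} [TopologicalSpace X] {A : Set X} (hA : IsISet A) (N : ℕ) :
    ∃ g : C(X, ℝ), ∀ r : ℝ, |r| ≤ N → ∃ x ∈ A, g x = r := by
  obtain ⟨f, a, b, hf, hab, hs⟩ := hA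
  have hba : 0 < b - a := sub_pos.2 hab
  refine ⟨⟨fun x => -N + 2 * N * ((f x - a) / (b - a)), by fun_prop⟩, fun r hr => ?_⟩
  rw [abs_le] at hr
  rcases Nat.eq_zero_or_pos N with rfl | hN
  · obtain ⟨x, hx, -⟩ := hs (left_mem_Icc.2 hab.le)
    refine ⟨x, hx, ?_⟩
    simp at hr ⊢
    linarith
  · have hN' : (0 : ℝ) < N := by exact_mod_cast hN
    have h0 : 0 ≤ (r + N) / (2 * N) := div_nonneg (by linarith) (by linarith)
    have h1 : (r + N) / (2 * N) ≤ 1 := by rw [div_le_one (by linarith)]; linarith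
    obtain ⟨x, hx, hfx⟩ := hs (show a + (b - a) * ((r + N) / (2 * N)) ∈ Icc a b from
      ⟨by nlinarith, by nlinarith⟩)
    refine ⟨x, hx, ?_⟩
    simp only [ContinuousMap.coe_mk, hfx]
    field_simp
    ring

/-- Gluing lemma. -/
lemma exists_glue {X Y : Type*} [TopologicalSpace X] [TopologicalSpace Y] [MetrizableSpace Y]
    [SecondCountableTopology Y] (e : X → Y) (he : Continuous e) (hinj : Function.Injective e)
    (G : Set C(X, ℝ)) (hG : G.Countable) :
    ∃ D : Set C(X, ℝ), D.Countable ∧ ∀ Z : Finset X, ∃ O : X → Set X,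
      (∀ z ∈ Z, IsOpen (O z) ∧ z ∈ O z) ∧
      ∀ g : X → C(X, ℝ), (∀ z, g z ∈ G) → ∃ f ∈ D, ∀ z ∈ Z, ∀ x ∈ O z, f x = g z x := by
  classical
  have hch : ∀ P Q : Set Y, ∃ φ : C(Y, ℝ), (∃ ψ : C(Y, ℝ), EqOn ψ 1 P ∧ EqOn ψ 0 Qᶜ) →
      EqOn φ 1 P ∧ EqOn φ 0 Qᶜ := by
    intro P Q
    by_cases h : ∃ ψ : C(Y, ℝ), EqOn ψ 1 P ∧ EqOn ψ 0 Qᶜ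
    · obtain ⟨ψ, hψ⟩ := h
      exact ⟨ψ, fun _ => hψ⟩
    · exact ⟨0, fun h' => absurd h' h⟩
  choose φ hφ using hch
  let B := countableBasis Y
  have : Countable B := (countable_countableBasis Y).to_subtype
  have : Countable G := hG.to_subtype
  let T : List ((B × B) × G) → C(X, ℝ) := fun l =>
    (l.map fun i => (φ i.1.1 i.1.2).comp ⟨e, he⟩ * (i.2 : C(X, ℝ))).sum
  refine ⟨range T, countable_range T, fun Z => ?_⟩
  obtain ⟨W, hW, hWd⟩ := (Z.finite_toSet.image e).t2_separation
  have hb := isBasis_countableBasis Y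
  have hpick : ∀ z : X, ∃ P Q : B, e z ∈ P.1 ∧ Q.1 ⊆ W (e z) ∧
      EqOn (φ P Q) 1 P.1 ∧ EqOn (φ P Q) 0 Q.1ᶜ := by
    intro z
    obtain ⟨Q, hQ, hzQ, hQW⟩ := hb.exists_subset_of_mem_open (hW (e z)).1 (hW (e z)).2
    obtain ⟨V, hV, hVc, hVQ⟩ := exists_mem_nhds_isClosed_subset ((hb.isOpen hQ).mem_nhds hzQ)
    obtain ⟨P, hP, hzP, hPV⟩ := hb.mem_nhds_iff.1 hV
    refine ⟨⟨P, hP⟩, ⟨Q, hQ⟩, hzP, hQW, hφ P Q ?_⟩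
    obtain ⟨ψ, h0, h1, -⟩ := exists_continuous_zero_one_of_isClosed
      (hb.isOpen hQ).isClosed_compl hVc
      (disjoint_left.2 fun x hx hx' => hx (hVQ hx'))
    exact ⟨ψ, h1.mono hPV, h0⟩
  choose P Q hzP hQW h1 h0 using hpick
  refine ⟨fun z => e ⁻¹' (P z).1, fun z _ => ⟨(hb.isOpen (P z).2).preimage he, hzP z⟩, ?_⟩
  intro g hg
  refine ⟨T (Z.toList.map fun z => ((P z, Q z), ⟨g z, hg z⟩)), mem_range_self _, ?_⟩
  intro z hz x hx
  have hsum : T (Z.toList.map fun z => ((P z, Q z), ⟨g z, hg z⟩)) =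
      ∑ w ∈ Z, (φ (P w) (Q w)).comp ⟨e, he⟩ * g w := by
    simp only [T, List.map_map]
    rw [← Finset.sum_map_toList]
    rfl
  rw [hsum, ContinuousMap.sum_apply, Finset.sum_eq_single_of_mem z hz]
  · have := h1 z hx
    simp at this
    simp [this]
  · intro w hw hwz
    have hxz : e x ∈ W (e z) := by
      by_contra hcon
      have h2 := h0 z (fun h => hcon (hQW z h))
      rw [h1 z hx] at h2
      simp at h2
    have hxw : e x ∉ (Q w).1 := fun h =>
      disjoint_left.1 (hWd (mem_image_of_mem e hw) (mem_image_of_mem e hz) (hinj.ne hwz))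
        (hQW w h) hxz
    have := h0 w hxw
    simp at this
    simp [this]

lemma exists_distinct {ι X : Type*} [Nonempty X] (V : ι → Set X) (F : Finset ι)
    (hV : ∀ i ∈ F, (V i).Infinite)
    (A : Set X) (hA : A.Finite) : ∃ y : ι → X, InjOn y F ∧ ∀ i ∈ F, y i ∈ V i ∧ y i ∉ A := by
  classical
  induction F using Finset.induction_on with
  | empty => exact ⟨fun _ => Classical.arbitrary X, by simp, by simp⟩
  | insert a s ha ih =>
    obtain ⟨y, hy, hy'⟩ := ih fun i hi => hV i (Finset.mem_insert_of_mem hi)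
    obtain ⟨p, hp, hpn⟩ := (hV a (Finset.mem_insert_self a s)).exists_notMem_finite
      (hA.union (s.finite_toSet.image y))
    have hne : ∀ i ∈ s, i ≠ a := fun i hi h => ha (h ▸ hi)
    refine ⟨Function.update y a p, ?_, ?_⟩
    · intro i hi j hj hij
      rw [Finset.mem_coe, Finset.mem_insert] at hi hj
      rcases hi with rfl | hi <;> rcases hj with rfl | hj
      · rfl
      · rw [Function.update_self, Function.update_of_ne (hne j hj)] at hij
        exact absurd (Or.inr ⟨j, hj, hij.symm⟩) hpn
      · rw [Function.update_self, Function.update_of_ne (hne i hi)] at hij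
        exact absurd (Or.inr ⟨i, hi, hij⟩) hpn
      · rw [Function.update_of_ne (hne j hj), Function.update_of_ne (hne i hi)] at hij
        exact hy hi hj hij
    · intro i hi
      rcases Finset.mem_insert.1 hi with rfl | hi
      · rw [Function.update_self]
        exact ⟨hp, fun h => hpn (Or.inl h)⟩
      · rw [Function.update_of_ne (hne i hi)]
        exact hy' i hi

lemma forward_submetrizable {X : Type*} [TopologicalSpace X] [T35Space X]
    (D : Set C(X, ℝ)) (hD : D.Countable) (hd : @Dense _ (biPointOpenTopology X) D) :
    SeparableSubmetrizable X := by
  have : Countable D := hD.to_subtype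
  let Φ : X → (D → ℝ) := fun x f => f.1 x
  have hΦ : Continuous Φ := continuous_pi fun f => f.1.continuous
  have hinj : Function.Injective Φ := by
    intro x y hxy
    by_contra hne
    obtain ⟨k, hk, hkx, hky⟩ := CompletelyRegularSpace.completely_regular x {y}
      isClosed_singleton (by simpa using hne)
    let k' : C(X, ℝ) := ⟨fun z => (k z : ℝ), by fun_prop⟩
    have ho : IsOpen[biPointOpenTopology X]
        ({f : C(X, ℝ) | f x ∈ Iio (1/2 : ℝ)} ∩ {f : C(X, ℝ) | f y ∈ Ioi (1/2 : ℝ)}) := by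
      let := biPointOpenTopology X
      exact IsOpen.inter (isOpen_generateFrom_of_mem (Or.inl ⟨x, _, isOpen_Iio, rfl⟩))
        (isOpen_generateFrom_of_mem (Or.inl ⟨y, _, isOpen_Ioi, rfl⟩))
    have hky' : k y = 1 := hky rfl
    obtain ⟨f, ⟨hf1, hf2⟩, hfD⟩ := (@dense_iff_inter_open _ (biPointOpenTopology X) D).1 hd _ ho
      ⟨k', by simp [k', hkx], by simp [k', hky']; norm_num⟩
    have := congrFun hxy ⟨f, hfD⟩
    simp only [Φ] at this
    simp only [mem_ofPred_eq, mem_Iio, mem_Ioi] at hf1 hf2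
    linarith
  refine ⟨TopologicalSpace.induced Φ inferInstance, continuous_iff_le_induced.1 hΦ, ?_, ?_⟩
  · let : TopologicalSpace X := TopologicalSpace.induced Φ inferInstance
    have := secondCountableTopology_induced X (D → ℝ) Φ
    infer_instance
  · let : TopologicalSpace X := TopologicalSpace.induced Φ inferInstance
    have h : IsEmbedding Φ := ⟨⟨rfl⟩, hinj⟩
    exact h.metrizableSpace

lemma forward_iset {X : Type*} [TopologicalSpace X]
    (D : Set C(X, ℝ)) (hD : D.Countable) (hd : @Dense _ (biPointOpenTopology X) D)
    (U : Set X) (hU : IsOpen U) (hne : U.Nonempty) : IsISet U := by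
  have hr : ∀ r : ℝ, ∃ f ∈ D, ∃ x ∈ U, f x = r := by
    intro r
    have ho : IsOpen[biPointOpenTopology X] {f : C(X, ℝ) | ∃ x ∈ U, f x = r} :=
      isOpen_generateFrom_of_mem (Or.inr ⟨U, r, hU, rfl⟩)
    obtain ⟨p, hp⟩ := hne
    obtain ⟨f, hf, hfD⟩ := (@dense_iff_inter_open _ (biPointOpenTopology X) D).1 hd _ ho
      ⟨ContinuousMap.const X r, p, hp, rfl⟩
    exact ⟨f, hfD, hf⟩
  obtain ⟨f0, hf0, -⟩ := hr 0
  obtain ⟨s, rfl⟩ := hD.exists_eq_range ⟨f0, hf0⟩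
  refine isISet_of_cover s fun r => ?_
  obtain ⟨_, ⟨n, rfl⟩, h⟩ := hr r
  exact ⟨n, h⟩

lemma backward_aux {X Y : Type*} [TopologicalSpace X] [TopologicalSpace Y] [MetrizableSpace Y]
    [SecondCountableTopology Y] (e : X → Y) (he : Continuous e) (hinj : Function.Injective e)
    (β : Set (Set X)) (hβ : β.Countable) (hπ : IsPiBase β)
    (hI : ∀ U : Set X, IsOpen U → U.Nonempty → IsISet U) :
    @SeparableSpace C(X, ℝ) (biPointOpenTopology X) := by
  classical
  rcases isEmpty_or_nonempty X with hX | hX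
  · have : Subsingleton C(X, ℝ) := ⟨fun f g => by ext x; exact hX.elim x⟩
    let := biPointOpenTopology X
    infer_instance
  have : Countable β := hβ.to_subtype
  choose k hk using fun (p : β × ℕ) =>
    (hI p.1.1 (hπ.1 _ p.1.2).1 (hπ.1 _ p.1.2).2).rescale p.2
  let G : Set C(X, ℝ) := range k ∪ range (fun q : ℚ => ContinuousMap.const X (q : ℝ))
  have hG : G.Countable := (countable_range _).union (countable_range _)
  obtain ⟨D, hD, hglue⟩ := exists_glue e he hinj G hG
  let := biPointOpenTopology X
  refine ⟨D, hD, ?_⟩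
  rw [(isTopologicalBasis_of_subbasis (rfl : biPointOpenTopology X = _)).dense_iff]
  rintro _ ⟨F, ⟨hF, hFs⟩, rfl⟩ ⟨f0, hf0⟩
  have hp : ∀ S : Set C(X, ℝ), ∃ (x : X) (U : Set ℝ), (∃ (x : X) (U : Set ℝ), IsOpen U ∧
      S = {f : C(X, ℝ) | f x ∈ U}) → IsOpen U ∧ S = {f : C(X, ℝ) | f x ∈ U} := by
    intro S
    by_cases h : ∃ (x : X) (U : Set ℝ), IsOpen U ∧ S = {f : C(X, ℝ) | f x ∈ U}
    · obtain ⟨x, U, h'⟩ := h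
      exact ⟨x, U, fun _ => h'⟩
    · exact ⟨Classical.arbitrary X, ∅, fun h' => absurd h' h⟩
  choose x W hp using hp
  have hh : ∀ S : Set C(X, ℝ), ∃ (V : Set X) (r : ℝ), (∃ (V : Set X) (r : ℝ), IsOpen V ∧
      S = {f : C(X, ℝ) | ∃ x ∈ V, f x = r}) → IsOpen V ∧
      S = {f : C(X, ℝ) | ∃ x ∈ V, f x = r} := by
    intro S
    by_cases h : ∃ (V : Set X) (r : ℝ), IsOpen V ∧ S = {f : C(X, ℝ) | ∃ x ∈ V, f x = r}
    · obtain ⟨V, r, h'⟩ := h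
      exact ⟨V, r, fun _ => h'⟩
    · exact ⟨∅, 0, fun h' => absurd h' h⟩
  choose V r hh using hh
  let Fp : Finset (Set C(X, ℝ)) := hF.toFinset.filter fun S =>
    IsOpen (W S) ∧ S = {f : C(X, ℝ) | f (x S) ∈ W S}
  let Fh : Finset (Set C(X, ℝ)) := hF.toFinset.filter fun S =>
    IsOpen (V S) ∧ S = {f : C(X, ℝ) | ∃ x ∈ V S, f x = r S}
  have hFp : ∀ S ∈ Fp, S ∈ F ∧ IsOpen (W S) ∧ S = {f : C(X, ℝ) | f (x S) ∈ W S} := by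
    intro S hS
    simpa [Fp] using hS
  have hFh : ∀ S ∈ Fh, S ∈ F ∧ IsOpen (V S) ∧ S = {f : C(X, ℝ) | ∃ x ∈ V S, f x = r S} := by
    intro S hS
    simpa [Fh] using hS
  have hVinf : ∀ S ∈ Fh, (V S).Infinite := by
    intro S hS
    obtain ⟨h1, h2, h3⟩ := hFh S hS
    have := hf0 S h1
    rw [h3] at this
    obtain ⟨p, hp, -⟩ := this
    exact (hI _ h2 ⟨p, hp⟩).infinite
  obtain ⟨y, hyinj, hy⟩ := exists_distinct V Fh hVinf (x '' Fp) (Fp.finite_toSet.image x)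
  obtain ⟨O, hO, hOg⟩ := hglue (Fp.image x ∪ Fh.image y)
  have hpick : ∀ z : X, ∃ g ∈ G, (∀ S ∈ Fh, y S = z → ∃ u ∈ O z ∩ V S, g u = r S) ∧
      (∀ S ∈ Fp, x S = z → g z ∈ W S) := by
    intro z
    by_cases hz : ∃ S ∈ Fh, y S = z
    · obtain ⟨S, hS, rfl⟩ := hz
      obtain ⟨hOo, hOm⟩ := hO (y S) (Finset.mem_union_right _ (Finset.mem_image_of_mem y hS))
      obtain ⟨U, hUβ, hU⟩ := hπ.2 (O (y S) ∩ V S) (hOo.inter (hFh S hS).2.1)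
        ⟨y S, hOm, (hy S hS).1⟩
      obtain ⟨N, hN⟩ := exists_nat_ge |r S|
      obtain ⟨u, hu, hur⟩ := hk (⟨U, hUβ⟩, N) (r S) hN
      refine ⟨k (⟨U, hUβ⟩, N), Or.inl (mem_range_self _), ?_, ?_⟩
      · intro S' hS' hSS
        obtain rfl := hyinj hS' hS hSS
        exact ⟨u, hU hu, hur⟩
      · intro S' hS' hSS
        exact absurd ⟨S', hS', hSS⟩ (hy S hS).2
    · have hop : IsOpen (⋂ S ∈ Fp.filter (fun S => x S = z), W S) :=
        isOpen_biInter_finset fun S hS => (hFp S (Finset.mem_filter.1 hS).1).2.1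
      have hmem : f0 z ∈ ⋂ S ∈ Fp.filter (fun S => x S = z), W S := by
        simp only [mem_iInter]
        intro S hS
        obtain ⟨hS1, rfl⟩ := Finset.mem_filter.1 hS
        have h3 := hf0 S (hFp S hS1).1
        rw [(hFp S hS1).2.2] at h3
        exact h3
      obtain ⟨q, hq⟩ := Rat.denseRange_cast (𝕜 := ℝ) |>.exists_mem_open hop ⟨_, hmem⟩
      refine ⟨_, Or.inr ⟨q, rfl⟩, fun S hS h => absurd ⟨S, hS, h⟩ hz, fun S hS h => ?_⟩
      simp only [mem_iInter] at hq
      exact hq S (Finset.mem_filter.2 ⟨hS, h⟩)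
  choose g hgG hgh hgp using hpick
  obtain ⟨f, hfD, hf⟩ := hOg g hgG
  refine ⟨f, fun S hS => ?_, hfD⟩
  rcases hFs hS with h | h
  · have hS' : S ∈ Fp := by simpa [Fp, hS] using hp S h
    rw [(hp S h).2]
    have hz : x S ∈ Fp.image x ∪ Fh.image y :=
      Finset.mem_union_left _ (Finset.mem_image_of_mem x hS')
    show f (x S) ∈ W S
    rw [hf _ hz _ (hO _ hz).2]
    exact hgp _ S hS' rfl
  · have hS' : S ∈ Fh := by simpa [Fh, hS] using hh S h
    rw [(hh S h).2]
    have hz : y S ∈ Fp.image x ∪ Fh.image y :=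
      Finset.mem_union_right _ (Finset.mem_image_of_mem y hS')
    obtain ⟨u, hu, hur⟩ := hgh _ S hS' rfl
    exact ⟨u, hu.2, by rw [hf _ hz _ hu.1, hur]⟩

/-- For a Tychonoff space with a countable π-base, `C_ph(X)` is separable iff
`X` is separable submetrizable and has a countable π-network of 𝓘-sets. -/
theorem stmt16 {X : Type*} [TopologicalSpace X] [T35Space X]
    (hβ : ∃ β : Set (Set X), β.Countable ∧ IsPiBase β) :
    @SeparableSpace C(X, ℝ) (biPointOpenTopology X) ↔
      (SeparableSubmetrizable X ∧
        ∃ γ : Set (Set X), γ.Countable ∧ IsPiNetwork γ ∧ ∀ A ∈ γ, IsISet A) := by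
  obtain ⟨β, hβc, hβ⟩ := hβ
  constructor
  · intro h
    obtain ⟨D, hD, hd⟩ := h.exists_countable_dense
    exact ⟨forward_submetrizable D hD hd, β, hβc, ⟨fun A hA => (hβ.1 A hA).2, hβ.2⟩,
      fun A hA => forward_iset D hD hd A (hβ.1 A hA).1 (hβ.1 A hA).2⟩
  · rintro ⟨hsm, γ, hγc, hγ, hγI⟩
    have hI : ∀ U : Set X, IsOpen U → U.Nonempty → IsISet U := by
      intro U hU hne
      obtain ⟨A, hA, hAU⟩ := hγ.2 U hU hne
      exact (hγI A hA).mono hAU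
    obtain ⟨t', hle, hsep, hmet⟩ := hsm
    have hsc : @SecondCountableTopology X t' := by
      let := t'
      let := metrizableSpaceMetric X
      exact UniformSpace.secondCountable_of_separable X
    refine @backward_aux X X (_) t' hmet hsc id (continuous_id_iff_le.2 ?_)
      Function.injective_id β hβc hβ hI
    exact hle
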